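/- Assume $b=\infty$. Then $\tfrac1{16}\sum_{k\ge 0} f(s_k)^4 \le \int_{s_0}^{\infty} f(v)^3\,dv \le \tfrac{27}{16}\sum_{k\ge 0} f(s_k)^4$; in particular $\sum_{k\ge 0} f(s_k)^4=\infty$ if and only if $\int_{s_0}^{\infty} f(v)^3\,dv=\infty$. -/

import Mathlib

open MeasureTheory ENNReal

/-!
On the cell `(s k, s (k + 1)]`, of length `τ * f (s k)`, a `K`-Lipschitz function `f` differs from
`f (s k)` by at most `K * τ * f (s k)`. So the integral of `f ^ p` over the cell lies between
`τ * (1 - K * τ) ^ p` and `τ * (1 + K * τ) ^ p` times `f (s k) ^ (p + 1)`. The cells tile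
`(s 0, ∞)`: a finite limit `L` of `s` would satisfy `L = L + τ * f L`, contradicting `0 < f L`.
-/

open Set Filter Topology
open scoped NNReal

theorem apply_mem_Icc_of_dist_le_mul {X : Type*} [PseudoMetricSpace X] {f : X → ℝ} {D : Set X}
    {K : ℝ≥0} {τ : ℝ} {x y : X} (hf : LipschitzOnWith K f D) (hx : x ∈ D) (hy : y ∈ D)
    (hxy : dist y x ≤ τ * f x) :
    f y ∈ Icc ((1 - K * τ) * f x) ((1 + K * τ) * f x) := by
  have hdist : |f y - f x| ≤ K * (τ * f x) :=
    (hf.dist_le_mul y hy x hx).trans (mul_le_mul_of_nonneg_left hxy K.coe_nonneg)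
  obtain ⟨hlower, hupper⟩ := abs_le.mp hdist
  constructor <;> linarith

theorem lintegral_Ioi_eq_tsum_lintegral_Ioc {α : Type*} [LinearOrder α] [TopologicalSpace α]
    [OrderClosedTopology α] [MeasurableSpace α] [OpensMeasurableSpace α] {μ : Measure α}
    {s : ℕ → α} (hmono : Monotone s) (hunbdd : ¬BddAbove (range s)) (g : α → ℝ≥0∞) :
    ∫⁻ v in Ioi (s 0), g v ∂μ = ∑' k, ∫⁻ v in Ioc (s k) (s (k + 1)), g v ∂μ := by
  have hcover : ⋃ k, Ioc (s k) (s (k + 1)) = Ioi (s 0) :=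
    iUnion_Ioc_map_succ_eq_Ioi (fun k => hmono (Nat.zero_le k)) hunbdd
  rw [← hcover]
  exact lintegral_iUnion (fun _ => measurableSet_Ioc) hmono.pairwise_disjoint_on_Ioc_succ g

theorem eq_top_iff_of_mul_le_of_le_mul {c C x y : ℝ≥0∞} (hc : c ≠ 0) (hC : C ≠ ⊤)
    (hlower : c * x ≤ y) (hupper : y ≤ C * x) : x = ⊤ ↔ y = ⊤ := by
  constructor
  · rintro rfl
    simpa only [ENNReal.mul_top hc, top_le_iff] using hlower
  · rintro rfl
    by_contra hx
    exact ENNReal.mul_ne_top hC hx (top_le_iff.mp hupper)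

theorem ofReal_mul_mul_ofReal_mul_rpow {τ c y : ℝ} (hτ : 0 ≤ τ) (hc : 0 ≤ c) (hy : 0 < y) (p : ℝ) :
    ENNReal.ofReal (τ * y) * ENNReal.ofReal ((c * y) ^ p) =
      ENNReal.ofReal (τ * c ^ p) * ENNReal.ofReal (y ^ (p + 1)) := by
  rw [← ENNReal.ofReal_mul (by positivity), ← ENNReal.ofReal_mul (by positivity),
    Real.mul_rpow hc hy.le, Real.rpow_add_one hy.ne']
  congr 1
  ring

theorem monotoneOn_ofReal_rpow {p : ℝ} (hp : 0 ≤ p) :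
    MonotoneOn (fun x : ℝ => ENNReal.ofReal (x ^ p)) (Ici 0) :=
  ENNReal.ofReal_mono.comp_monotoneOn (Real.monotoneOn_rpow_Ici_of_exponent_nonneg hp)

/-- The sequence `s` is produced by the explicit Euler scheme with step size `τ` for the
autonomous equation `x' = f x`; its consecutive terms cut `(s 0, ∞)` into the cells on which an
integral is compared with a sum. -/
def IsEulerSequence (f : ℝ → ℝ) (τ : ℝ) (s : ℕ → ℝ) : Prop :=
  ∀ k, s (k + 1) = s k + τ * f (s k)

namespace IsEulerSequence

variable {f : ℝ → ℝ} {τ : ℝ} {s : ℕ → ℝ} {K : ℝ≥0} {φ : ℝ → ℝ≥0∞}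

theorem apply_zero_le (hs : IsEulerSequence f τ s) (hτ : 0 ≤ τ)
    (hf : ∀ x ∈ Ici (s 0), 0 ≤ f x) (k : ℕ) : s 0 ≤ s k := by
  induction k with
  | zero => exact le_rfl
  | succ k ih =>
    rw [hs k]
    exact ih.trans (le_add_of_nonneg_right (mul_nonneg hτ (hf _ ih)))

theorem monotone (hs : IsEulerSequence f τ s) (hτ : 0 ≤ τ) (hf : ∀ x ∈ Ici (s 0), 0 ≤ f x) :
    Monotone s := by
  refine monotone_nat_of_le_succ fun k => ?_
  rw [hs k]
  exact le_add_of_nonneg_right (mul_nonneg hτ (hf _ (hs.apply_zero_le hτ hf k)))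

theorem apply_eq_zero_of_tendsto {L : ℝ} (hs : IsEulerSequence f τ s) (hτ : τ ≠ 0)
    (hL : Tendsto s atTop (𝓝 L)) (hfL : Tendsto (fun k => f (s k)) atTop (𝓝 (f L))) :
    f L = 0 := by
  have hstep : Tendsto (fun k => s (k + 1)) atTop (𝓝 (L + τ * f L)) := by
    simp only [hs _]
    exact hL.add (hfL.const_mul τ)
  have hfixed : L + τ * f L = L :=
    tendsto_nhds_unique hstep (hL.comp (tendsto_add_atTop_nat 1))
  simpa [hτ] using hfixed

theorem not_bddAbove_range (hs : IsEulerSequence f τ s) (hτ : 0 < τ)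
    (hpos : ∀ x ∈ Ici (s 0), 0 < f x) (hcont : ContinuousOn f (Ici (s 0))) :
    ¬BddAbove (range s) := by
  intro hbdd
  have hnonneg : ∀ x ∈ Ici (s 0), 0 ≤ f x := fun x hx => (hpos x hx).le
  have hL : Tendsto s atTop (𝓝 (⨆ k, s k)) := tendsto_atTop_ciSup (hs.monotone hτ.le hnonneg) hbdd
  have hmem : (⨆ k, s k) ∈ Ici (s 0) := le_ciSup hbdd 0
  have hL' : Tendsto s atTop (𝓝[Ici (s 0)] (⨆ k, s k)) :=
    tendsto_nhdsWithin_iff.mpr ⟨hL, .of_forall (hs.apply_zero_le hτ.le hnonneg)⟩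
  exact (hpos _ hmem).ne' (hs.apply_eq_zero_of_tendsto hτ.ne' hL ((hcont _ hmem).tendsto.comp hL'))

theorem volume_Ioc (hs : IsEulerSequence f τ s) (k : ℕ) :
    volume (Ioc (s k) (s (k + 1))) = ENNReal.ofReal (τ * f (s k)) := by
  rw [Real.volume_Ioc, hs k, add_sub_cancel_left]

theorem lintegral_Ioi_eq_tsum (hs : IsEulerSequence f τ s) (hτ : 0 < τ)
    (hpos : ∀ x ∈ Ici (s 0), 0 < f x) (hcont : ContinuousOn f (Ici (s 0))) (g : ℝ → ℝ≥0∞) :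
    ∫⁻ v in Ioi (s 0), g v = ∑' k, ∫⁻ v in Ioc (s k) (s (k + 1)), g v :=
  lintegral_Ioi_eq_tsum_lintegral_Ioc (hs.monotone hτ.le fun x hx => (hpos x hx).le)
    (hs.not_bddAbove_range hτ hpos hcont) g

theorem apply_mem_Icc (hs : IsEulerSequence f τ s) (hτ : 0 ≤ τ)
    (hf : ∀ x ∈ Ici (s 0), 0 ≤ f x) (hlip : LipschitzOnWith K f (Ici (s 0))) {k : ℕ} {v : ℝ}
    (hv : v ∈ Ioc (s k) (s (k + 1))) :
    f v ∈ Icc ((1 - K * τ) * f (s k)) ((1 + K * τ) * f (s k)) := by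
  have hk : s 0 ≤ s k := hs.apply_zero_le hτ hf k
  refine apply_mem_Icc_of_dist_le_mul hlip hk (hk.trans hv.1.le) ?_
  rw [Real.dist_eq, abs_of_pos (sub_pos.mpr hv.1), sub_le_iff_le_add', ← hs k]
  exact hv.2

theorem tsum_le_lintegral_comp (hs : IsEulerSequence f τ s) (hτ : 0 < τ)
    (hpos : ∀ x ∈ Ici (s 0), 0 < f x) (hlip : LipschitzOnWith K f (Ici (s 0)))
    (hKτ : K * τ ≤ 1) (hφ : MonotoneOn φ (Ici 0)) :
    ∑' k, ENNReal.ofReal (τ * f (s k)) * φ ((1 - K * τ) * f (s k)) ≤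
      ∫⁻ v in Ioi (s 0), φ (f v) := by
  have hnonneg : ∀ x ∈ Ici (s 0), 0 ≤ f x := fun x hx => (hpos x hx).le
  rw [hs.lintegral_Ioi_eq_tsum hτ hpos hlip.continuousOn]
  refine ENNReal.tsum_le_tsum fun k => ?_
  rw [← hs.volume_Ioc, mul_comm, ← setLIntegral_const]
  refine setLIntegral_mono' measurableSet_Ioc fun v hv => ?_
  have hlower := (hs.apply_mem_Icc hτ.le hnonneg hlip hv).1
  have hlower_nonneg : 0 ≤ (1 - K * τ) * f (s k) :=
    mul_nonneg (sub_nonneg.mpr hKτ) (hnonneg _ (hs.apply_zero_le hτ.le hnonneg k))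
  exact hφ hlower_nonneg (hlower_nonneg.trans hlower) hlower

theorem lintegral_comp_le_tsum (hs : IsEulerSequence f τ s) (hτ : 0 < τ)
    (hpos : ∀ x ∈ Ici (s 0), 0 < f x) (hlip : LipschitzOnWith K f (Ici (s 0)))
    (hφ : MonotoneOn φ (Ici 0)) :
    ∫⁻ v in Ioi (s 0), φ (f v) ≤
      ∑' k, ENNReal.ofReal (τ * f (s k)) * φ ((1 + K * τ) * f (s k)) := by
  have hnonneg : ∀ x ∈ Ici (s 0), 0 ≤ f x := fun x hx => (hpos x hx).le
  rw [hs.lintegral_Ioi_eq_tsum hτ hpos hlip.continuousOn]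
  refine ENNReal.tsum_le_tsum fun k => ?_
  rw [← hs.volume_Ioc, mul_comm, ← setLIntegral_const]
  refine setLIntegral_mono' measurableSet_Ioc fun v hv => ?_
  have hupper := (hs.apply_mem_Icc hτ.le hnonneg hlip hv).2
  have hv_nonneg : 0 ≤ f v := hnonneg v ((hs.apply_zero_le hτ.le hnonneg k).trans hv.1.le)
  exact hφ hv_nonneg (hv_nonneg.trans hupper) hupper

end IsEulerSequence

theorem stmt3_general {f : ℝ → ℝ} {τ p : ℝ} {s : ℕ → ℝ} {K : ℝ≥0} (hs : IsEulerSequence f τ s)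
    (hpos : ∀ x ∈ Ici (s 0), 0 < f x) (hlip : LipschitzOnWith K f (Ici (s 0)))
    (hτ : 0 < τ) (hKτ : K * τ < 1) (hp : 0 ≤ p) :
    ENNReal.ofReal (τ * (1 - K * τ) ^ p) * ∑' k, ENNReal.ofReal (f (s k) ^ (p + 1)) ≤
        ∫⁻ v in Ioi (s 0), ENNReal.ofReal (f v ^ p) ∧
      ∫⁻ v in Ioi (s 0), ENNReal.ofReal (f v ^ p) ≤
        ENNReal.ofReal (τ * (1 + K * τ) ^ p) * ∑' k, ENNReal.ofReal (f (s k) ^ (p + 1)) ∧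
      (∑' k, ENNReal.ofReal (f (s k) ^ (p + 1)) = ⊤ ↔
        ∫⁻ v in Ioi (s 0), ENNReal.ofReal (f v ^ p) = ⊤) := by
  have hfs (k : ℕ) : 0 < f (s k) :=
    hpos _ (hs.apply_zero_le hτ.le (fun x hx => (hpos x hx).le) k)
  have hsub : 0 < 1 - K * τ := sub_pos.mpr hKτ
  have hlower := hs.tsum_le_lintegral_comp hτ hpos hlip hKτ.le (monotoneOn_ofReal_rpow hp)
  have hupper := hs.lintegral_comp_le_tsum hτ hpos hlip (monotoneOn_ofReal_rpow hp)
  simp only [ofReal_mul_mul_ofReal_mul_rpow hτ.le hsub.le (hfs _), ENNReal.tsum_mul_left]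
    at hlower
  have hadd : 0 ≤ 1 + K * τ := by positivity
  simp only [ofReal_mul_mul_ofReal_mul_rpow hτ.le hadd (hfs _), ENNReal.tsum_mul_left] at hupper
  have hcoeff : ENNReal.ofReal (τ * (1 - K * τ) ^ p) ≠ 0 :=
    (ENNReal.ofReal_pos.mpr (by positivity)).ne'
  exact ⟨hlower, hupper,
    eq_top_iff_of_mul_le_of_le_mul hcoeff ENNReal.ofReal_ne_top hlower hupper⟩

/-- Given `-∞ ≤ a < b = ∞` and a function `f` that is strictly positive on
`(a,∞)`, zero on `(-∞,a]` and `1`-Lipschitz on `(a,∞)`, and the sequence `s_{k+1} = s_k + f(s_k)/2`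
started at `s_0 ∈ (a,∞)`, one has
`(1/16) ∑_{k≥0} f(s_k)⁴ ≤ ∫_{s_0}^∞ f(v)³ dv ≤ (27/16) ∑_{k≥0} f(s_k)⁴`; in particular
`∑_{k≥0} f(s_k)⁴ = ∞` iff `∫_{s_0}^∞ f(v)³ dv = ∞`. -/
theorem stmt3
    (a : EReal) (ha : a < ⊤)
    (f : ℝ → ℝ)
    (hf_nonneg : ∀ x : ℝ, 0 ≤ f x)
    (hf_pos : ∀ x : ℝ, a < (x : EReal) → 0 < f x)
    (hf_zero : ∀ x : ℝ, (x : EReal) ≤ a → f x = 0)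
    (hf_lip : ∀ u v : ℝ, a < (u : EReal) → a < (v : EReal) → |f u - f v| ≤ |u - v|)
    (s : ℕ → ℝ) (hs0 : a < (s 0 : EReal))
    (hrec : ∀ k : ℕ, s (k + 1) = s k + f (s k) / 2) :
    (1 / 16 : ℝ≥0∞) * ∑' k : ℕ, ENNReal.ofReal (f (s k) ^ 4)
        ≤ ∫⁻ v in Set.Ioi (s 0), ENNReal.ofReal (f v ^ 3) ∧
      (∫⁻ v in Set.Ioi (s 0), ENNReal.ofReal (f v ^ 3))
        ≤ (27 / 16 : ℝ≥0∞) * ∑' k : ℕ, ENNReal.ofReal (f (s k) ^ 4) ∧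
      ((∑' k : ℕ, ENNReal.ofReal (f (s k) ^ 4) = ⊤) ↔
        (∫⁻ v in Set.Ioi (s 0), ENNReal.ofReal (f v ^ 3)) = ⊤) := by
  have hs : IsEulerSequence f (1 / 2) s := fun k => by rw [hrec k, div_eq_inv_mul, one_div]
  have hmem : ∀ x ∈ Ici (s 0), a < (x : EReal) := fun x hx =>
    hs0.trans_le (EReal.coe_le_coe_iff.mpr hx)
  have hlip : LipschitzOnWith 1 f (Ici (s 0)) := .of_dist_le_mul fun x hx y hy => by
    simpa only [Real.dist_eq, NNReal.coe_one, one_mul] using hf_lip x y (hmem x hx) (hmem y hy)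
  have h := stmt3_general (p := 3) hs (fun x hx => hf_pos x (hmem x hx)) hlip
    (by norm_num) (by norm_num) (by norm_num)
  have hlower : ENNReal.ofReal (1 / 2 * (1 - (1 : ℝ≥0) * (1 / 2)) ^ 3) = 1 / 16 := by
    norm_num [ENNReal.ofReal_div_of_pos]
  have hupper : ENNReal.ofReal (1 / 2 * (1 + (1 : ℝ≥0) * (1 / 2)) ^ 3) = 27 / 16 := by
    norm_num [ENNReal.ofReal_div_of_pos]
  have hfour : (3 + 1 : ℝ) = 4 := by norm_num
  simpa only [hlower, hupper, hfour, Real.rpow_ofNat] using h
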